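/- Let G and H be finite groups whose intersection is a common subgroup I (that is, I is a subgroup of both G and H, and G ∩ H = I). Let P = G ∪ H, with σ the inversion map, D(P) = (G × G) ∪ (H × H), and products defined as in the parent groups. Then P is a pregroup, and its universal group U(P) is isomorphic to the amalgamated free product G ∗_I H. -/

import Mathlib

/-!
The axioms of a pregroup become group identities once `P` sits inside a group. If `A`, `B` are
subgroups of a group `U` and `j : P → U` is injective with image `A ∪ B`, then `P` carries a
pregroup structure in which `x`, `y` are multipliable iff both lie in `A` or both lie in `B`
(`Pregroup.ofSubgroups`): the identities hold in `U`, and the domain conditions (P4) and (P5) are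
a case distinction using only closure of `A` and `B`. For `P = G ∪ H` the ambient group is the
pushout `Monoid.PushoutI`: the normal form theorem makes `G` and `H` embed and meet exactly in `I`,
so the obvious map from `AmalCarrier` to the pushout is injective (`amalEmb_injective`).

For the universal group, any pregroup `P` has a map `toU : P → U(P)` sending `1` to `1` that
preserves defined products and is universal with this property (`toU_mul`, `liftU`, `homU_ext`).
For `P = G ∪ H`, a product-preserving map to a group `K` is the same as a pair of homomorphisms
from `G` and `H` to `K` agreeing on `I`. Given such a pair, the map on `P` is obtained by
restricting to `P` the homomorphism induced on the pushout.
-/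

/-- A pregroup in the sense of Stallings: a set `P` with a distinguished element `one`,
a partial multiplication, defined for pairs in `D` and modelled here as a total
function `mul` whose values are only meaningful on pairs in `D`, and an involution
`inv` (written `x ↦ x^σ` in the literature), satisfying Stallings' axioms (P1)–(P5). -/
structure Pregroup (P : Type*) where
  one : P
  D : P → P → Prop
  mul : P → P → P
  inv : P → P
  /-- `σ` is an involution. -/
  inv_inv : ∀ x, inv (inv x) = x
  /-- (P1) -/
  D_one_left : ∀ x, D one x
  D_one_right : ∀ x, D x one
  one_mul : ∀ x, mul one x = x
  mul_one : ∀ x, mul x one = x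
  /-- (P2) -/
  D_mul_inv : ∀ x, D x (inv x)
  D_inv_mul : ∀ x, D (inv x) x
  mul_inv : ∀ x, mul x (inv x) = one
  inv_mul : ∀ x, mul (inv x) x = one
  /-- (P3) -/
  D_inv : ∀ x y, D x y → D (inv y) (inv x)
  inv_mul_eq : ∀ x y, D x y → inv (mul x y) = mul (inv y) (inv x)
  /-- (P4) -/
  D_assoc : ∀ x y z, D x y → D y z → (D (mul x y) z ↔ D x (mul y z))
  mul_assoc : ∀ x y z, D x y → D y z → D (mul x y) z → mul (mul x y) z = mul x (mul y z)
  /-- (P5) -/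
  five : ∀ x y z t, D x y → D y z → D z t → D (mul x y) z ∨ D (mul y z) t

namespace Pregroup

variable {P : Type*}

/-- The words `x x^σ` (`x ∈ X = P \ {1}`), as words over `X`. -/
def invWords (pg : Pregroup P) : Set (List {x : P // x ≠ pg.one}) :=
  {w | ∃ x y : {x : P // x ≠ pg.one}, (y : P) = pg.inv (x : P) ∧ w = [x, y]}

/-- The set `V_P` of length-three words `x y [xy]^σ` with `(x, y) ∈ D(P)`, `x ≠ y^σ`. -/
def vpWords (pg : Pregroup P) : Set (List {x : P // x ≠ pg.one}) :=
  {w | ∃ x y z : {x : P // x ≠ pg.one}, pg.D (x : P) (y : P) ∧ (x : P) ≠ pg.inv (y : P) ∧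
      (z : P) = pg.inv (pg.mul (x : P) (y : P)) ∧ w = [x, y, z]}

/-- Interpret a word over `X` as an element of the free group on `X`. -/
def wordToFree (pg : Pregroup P) (w : List {x : P // x ≠ pg.one}) :
    FreeGroup {x : P // x ≠ pg.one} :=
  (w.map FreeGroup.of).prod

/-- The group `F(X^σ) = ⟨X ∣ x x^σ (x ∈ X)⟩`. -/
abbrev FXsigmaGroup (pg : Pregroup P) : Type _ :=
  PresentedGroup (pg.wordToFree '' pg.invWords)

/-- Interpret a word over `X` as an element of `F(X^σ)`. -/
def wordToFX (pg : Pregroup P) (w : List {x : P // x ≠ pg.one}) : pg.FXsigmaGroup :=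
  (w.map fun x => (PresentedGroup.of x : pg.FXsigmaGroup)).prod

/-- The universal group `U(P) = ⟨X ∣ {x x^σ : x ∈ X} ∪ V_P⟩` of a pregroup. -/
abbrev UniversalGroup (pg : Pregroup P) : Type _ :=
  PresentedGroup (pg.wordToFree '' (pg.invWords ∪ pg.vpWords))

/-- Interpret a word over `X` as an element of `U(P)`. -/
def wordToU (pg : Pregroup P) (w : List {x : P // x ≠ pg.one}) : pg.UniversalGroup :=
  (w.map fun x => (PresentedGroup.of x : pg.UniversalGroup)).prod

end Pregroup

/-- The carrier of the pregroup `P = G ∪ H` for an amalgamated free product: the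
elements of `G` together with the elements of `H` not lying in (the image of) the
common subgroup `I`. -/
def AmalCarrier (G H : Type) [Group G] [Group H] {I : Type} [Group I]
    (ψ : I →* H) : Type :=
  G ⊕ {h : H // ¬∃ i : I, ψ i = h}

/-- The natural injection of `G` into the carrier. -/
def amalG {G H : Type} [Group G] [Group H] {I : Type} [Group I]
    (ψ : I →* H) (g : G) : AmalCarrier G H ψ :=
  Sum.inl g

/-- The natural injection of `H` into the carrier, sending an element of the image of
`I` to the corresponding element of `G`. -/
noncomputable def amalH {G H : Type} [Group G] [Group H] {I : Type} [Group I]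
    (φ : I →* G) (ψ : I →* H) (h : H) : AmalCarrier G H ψ :=
  haveI := Classical.dec (∃ i : I, ψ i = h)
  if hm : ∃ i : I, ψ i = h then Sum.inl (φ hm.choose) else Sum.inr ⟨h, hm⟩

/-- `U` together with the homomorphisms `fG`, `fH` is the pushout (amalgamated free
product) of the injections `φ : I →* G` and `ψ : I →* H`: the square commutes and
it satisfies the universal property. -/
def IsAmalgamatedProduct {I G H U : Type} [Group I] [Group G] [Group H] [Group U]
    (φ : I →* G) (ψ : I →* H) (fG : G →* U) (fH : H →* U) : Prop :=
  fG.comp φ = fH.comp ψ ∧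
  ∀ (K : Type) [Group K], ∀ (kG : G →* K) (kH : H →* K),
    kG.comp φ = kH.comp ψ →
      ∃! u : U →* K, u.comp fG = kG ∧ u.comp fH = kH

/-! ### Pregroups inside a group -/

namespace Pregroup

section OfSubgroups

variable {P U : Type*} [Group U]

open Classical in
/-- The pregroup structure transported to `P` along an injection `j` of `P` into a group, with
image the union of two subgroups `A` and `B`. Where the product of `j x` and `j y` lies outside
`A ∪ B` (hence `(x, y)` outside the domain), the multiplication takes the junk value `x`. -/
noncomputable def ofSubgroups (A B : Subgroup U) (j : P → U) (hj : Function.Injective j)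
    (hr : ∀ u, (∃ p, j p = u) ↔ u ∈ A ∨ u ∈ B) : Pregroup P :=
  have h1 : ∃ p, j p = 1 := (hr 1).2 (Or.inl A.one_mem)
  have hi : ∀ x, ∃ p, j p = (j x)⁻¹ := fun x =>
    (hr _).2 (((hr _).1 ⟨x, rfl⟩).imp A.inv_mem B.inv_mem)
  let D : P → P → Prop := fun x y => (j x ∈ A ∧ j y ∈ A) ∨ (j x ∈ B ∧ j y ∈ B)
  let mul : P → P → P := fun x y => if h : ∃ p, j p = j x * j y then h.choose else x
  have hm : ∀ x y, D x y → j (mul x y) = j x * j y := fun x y hxy => by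
    have h : ∃ p, j p = j x * j y :=
      (hr _).2 (hxy.imp (fun h => A.mul_mem h.1 h.2) (fun h => B.mul_mem h.1 h.2))
    simp only [mul, dif_pos h]
    exact h.choose_spec
  have one_spec : j h1.choose = 1 := h1.choose_spec
  have inv_spec : ∀ x, j (hi x).choose = (j x)⁻¹ := fun x => (hi x).choose_spec
  have hAB : ∀ x, j x ∈ A ∨ j x ∈ B := fun x => (hr _).1 ⟨x, rfl⟩
  have Dl : ∀ x, D h1.choose x := fun x => by
    simpa [D, one_spec] using hAB x
  have Dr : ∀ x, D x h1.choose := fun x => by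
    simpa [D, one_spec] using hAB x
  have Dxi : ∀ x, D x (hi x).choose := fun x => by
    simpa [D, inv_spec] using hAB x
  have Dix : ∀ x, D (hi x).choose x := fun x => by
    simpa [D, inv_spec] using hAB x
  have Dinv : ∀ x y, D x y → D (hi y).choose (hi x).choose := fun x y h => by
    simpa [D, inv_spec, and_comm] using h
  have Dassoc : ∀ x y z, D x y → D y z → (D (mul x y) z ↔ D x (mul y z)) := by
    intro x y z hxy hyz
    have e1 := hm x y hxy
    have e2 := hm y z hyz
    simp only [D] at hxy hyz ⊢
    rw [e1, e2]
    -- In a subgroup, membership of a product and of one factor gives that of the other factor.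
    have k1 := fun h : j y ∈ A => A.mul_mem_cancel_right (y := j x) h
    have k2 := fun h : j y ∈ B => B.mul_mem_cancel_right (y := j x) h
    have k3 := fun h : j y ∈ A => A.mul_mem_cancel_left (y := j z) h
    have k4 := fun h : j y ∈ B => B.mul_mem_cancel_left (y := j z) h
    have k5 := fun h : j x ∈ A => A.mul_mem_cancel_left (y := j y) h
    have k6 := fun h : j x ∈ B => B.mul_mem_cancel_left (y := j y) h
    have k7 := fun h : j z ∈ A => A.mul_mem_cancel_right (y := j y) h
    have k8 := fun h : j z ∈ B => B.mul_mem_cancel_right (y := j y) h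
    grind
  { one := h1.choose
    D := D
    mul := mul
    inv := fun x => (hi x).choose
    inv_inv := fun x => hj (by rw [inv_spec, inv_spec, _root_.inv_inv])
    D_one_left := Dl
    D_one_right := Dr
    one_mul := fun x => hj (by rw [hm _ _ (Dl x), one_spec, _root_.one_mul])
    mul_one := fun x => hj (by rw [hm _ _ (Dr x), one_spec, _root_.mul_one])
    D_mul_inv := Dxi
    D_inv_mul := Dix
    mul_inv := fun x => hj (by rw [hm _ _ (Dxi x), inv_spec, one_spec, mul_inv_cancel])
    inv_mul := fun x => hj (by rw [hm _ _ (Dix x), inv_spec, one_spec, inv_mul_cancel])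
    D_inv := Dinv
    inv_mul_eq := fun x y h => hj (by
      rw [inv_spec, hm _ _ h, hm _ _ (Dinv x y h), inv_spec, inv_spec, mul_inv_rev])
    D_assoc := Dassoc
    mul_assoc := fun x y z hxy hyz h => hj (by
      rw [hm _ _ h, hm _ _ hxy, hm _ _ ((Dassoc x y z hxy hyz).1 h), hm _ _ hyz,
        _root_.mul_assoc])
    five := fun x y z t hxy hyz hzt => by
      have e1 := hm x y hxy
      have e2 := hm y z hyz
      simp only [D] at hxy hyz hzt ⊢
      rw [e1, e2]
      have k1 := fun (h : j x ∈ A) (h' : j y ∈ A) => A.mul_mem h h'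
      have k2 := fun (h : j x ∈ B) (h' : j y ∈ B) => B.mul_mem h h'
      have k3 := fun (h : j y ∈ A) (h' : j z ∈ A) => A.mul_mem h h'
      have k4 := fun (h : j y ∈ B) (h' : j z ∈ B) => B.mul_mem h h'
      grind }

variable {A B : Subgroup U} {j : P → U} {hj : Function.Injective j}
  {hr : ∀ u, (∃ p, j p = u) ↔ u ∈ A ∨ u ∈ B}

theorem ofSubgroups_D (x y : P) : (ofSubgroups A B j hj hr).D x y ↔
    (j x ∈ A ∧ j y ∈ A) ∨ (j x ∈ B ∧ j y ∈ B) :=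
  Iff.rfl

theorem map_one_ofSubgroups : j (ofSubgroups A B j hj hr).one = 1 :=
  ((hr 1).2 (Or.inl A.one_mem)).choose_spec

theorem map_mul_ofSubgroups {x y : P} (h : (ofSubgroups A B j hj hr).D x y) :
    j ((ofSubgroups A B j hj hr).mul x y) = j x * j y := by
  have h' : ∃ p, j p = j x * j y :=
    (hr _).2 (h.imp (fun h => A.mul_mem h.1 h.2) (fun h => B.mul_mem h.1 h.2))
  simp only [ofSubgroups, dif_pos h']
  exact h'.choose_spec

theorem map_inv_ofSubgroups (x : P) : j ((ofSubgroups A B j hj hr).inv x) = (j x)⁻¹ :=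
  ((hr _).2 (((hr _).1 ⟨x, rfl⟩).imp A.inv_mem B.inv_mem)).choose_spec

end OfSubgroups

/-! ### The universal property of `U(P)` -/

section Universal

variable {P : Type*} (pg : Pregroup P)

open Classical in
/-- The canonical map from a pregroup to its universal group, extended from the generators
`P ∖ {1}` by sending `1` to `1`. -/
noncomputable def toU (x : P) : pg.UniversalGroup :=
  if h : x = pg.one then 1 else PresentedGroup.of ⟨x, h⟩

theorem toU_one : pg.toU pg.one = 1 := by simp [toU]

theorem toU_of (x : {x : P // x ≠ pg.one}) : pg.toU x = PresentedGroup.of x := by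
  simp [toU, x.2]

theorem inv_one : pg.inv pg.one = pg.one := by
  rw [← pg.one_mul (pg.inv pg.one), pg.mul_inv]

theorem inv_ne_one {x : P} (h : x ≠ pg.one) : pg.inv x ≠ pg.one := fun h' =>
  h (by rw [← pg.inv_inv x, h', pg.inv_one])

/-- In a pregroup `xy = 1` forces `x = y^σ`. -/
theorem eq_inv_of_mul_eq_one {x y : P} (hD : pg.D x y) (h : pg.mul x y = pg.one) :
    x = pg.inv y := by
  have hD' : pg.D (pg.mul x y) (pg.inv y) := h ▸ pg.D_one_left _
  have := pg.mul_assoc x y (pg.inv y) hD (pg.D_mul_inv y) hD'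
  rw [h, pg.one_mul, pg.mul_inv, pg.mul_one] at this
  exact this.symm

theorem wordToU_eq_one {w : List {x : P // x ≠ pg.one}} (h : w ∈ pg.invWords ∪ pg.vpWords) :
    (w.map fun x => (PresentedGroup.of x : pg.UniversalGroup)).prod = 1 := by
  have := PresentedGroup.one_of_mem (Set.mem_image_of_mem pg.wordToFree h)
  rw [wordToFree, map_list_prod, List.map_map] at this
  exact this

theorem toU_mul_toU_inv (x : P) : pg.toU x * pg.toU (pg.inv x) = 1 := by
  by_cases h : x = pg.one
  · simp [h, inv_one, toU_one]
  · have := pg.wordToU_eq_one (w := [⟨x, h⟩, ⟨pg.inv x, pg.inv_ne_one h⟩])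
      (Or.inl ⟨_, _, rfl, rfl⟩)
    simpa [← toU_of] using this

theorem toU_mul {x y : P} (hD : pg.D x y) : pg.toU (pg.mul x y) = pg.toU x * pg.toU y := by
  by_cases hx : x = pg.one
  · simp [hx, pg.one_mul, toU_one]
  by_cases hy : y = pg.one
  · simp [hy, pg.mul_one, toU_one]
  by_cases hxy : x = pg.inv y
  · have := pg.toU_mul_toU_inv (pg.inv y)
    rw [pg.inv_inv] at this
    rw [hxy, pg.inv_mul, toU_one, this]
  · have hne : pg.mul x y ≠ pg.one := fun h => hxy (pg.eq_inv_of_mul_eq_one hD h)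
    have := pg.wordToU_eq_one
      (w := [⟨x, hx⟩, ⟨y, hy⟩, ⟨pg.inv (pg.mul x y), pg.inv_ne_one hne⟩])
      (Or.inr ⟨_, _, _, hD, hxy, rfl, rfl⟩)
    simp only [List.map_cons, List.map_nil, List.prod_cons, List.prod_nil, ← toU_of,
      _root_.mul_one] at this
    have h2 := pg.toU_mul_toU_inv (pg.mul x y)
    rw [← _root_.mul_assoc] at this
    exact mul_right_cancel (h2.trans this.symm)

/-- Universal property of `U(P)`, existence: a map from `P` to a group that preserves the defined
products factors through `toU`. -/
theorem liftU {K : Type*} [Group K] (f : P → K)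
    (hf : ∀ x y, pg.D x y → f (pg.mul x y) = f x * f y) :
    ∃ u : pg.UniversalGroup →* K, ∀ x, u (pg.toU x) = f x := by
  have h1 : f pg.one = 1 := by
    have := hf _ _ (pg.D_one_left pg.one)
    rwa [pg.one_mul, left_eq_mul] at this
  have hi : ∀ x, f x * f (pg.inv x) = 1 := fun x => by
    rw [← hf _ _ (pg.D_mul_inv x), pg.mul_inv, h1]
  have hrel : ∀ r ∈ pg.wordToFree '' (pg.invWords ∪ pg.vpWords),
      FreeGroup.lift (fun x : {x : P // x ≠ pg.one} => f x) r = 1 := by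
    rintro _ ⟨w, hw, rfl⟩
    rcases hw with ⟨x, y, hy, rfl⟩ | ⟨x, y, z, hD, -, hz, rfl⟩
    · simp [wordToFree, hy, hi]
    · simp [wordToFree, hz, ← _root_.mul_assoc, ← hf _ _ hD, hi]
  refine ⟨PresentedGroup.toGroup hrel, fun x => ?_⟩
  by_cases h : x = pg.one
  · rw [h, toU_one, map_one, h1]
  · rw [pg.toU_of ⟨x, h⟩, PresentedGroup.toGroup.of]

/-- Universal property of `U(P)`, uniqueness. -/
theorem homU_ext {K : Type*} [Group K] {u v : pg.UniversalGroup →* K}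
    (h : ∀ x, u (pg.toU x) = v (pg.toU x)) : u = v :=
  PresentedGroup.ext fun x => by rw [← toU_of, h]

end Universal

end Pregroup

/-! ### The pushout of `G` and `H` over `I` -/

section Amalgam

open Monoid

/-- The two factors as a family indexed by `Bool`, the form expected by `Monoid.PushoutI`. -/
def AmalFam (G H : Type) : Bool → Type
  | false => G
  | true => H

instance (G H : Type) [Group G] [Group H] : ∀ b, Group (AmalFam G H b)
  | false => inferInstanceAs (Group G)
  | true => inferInstanceAs (Group H)

variable {I G H : Type} [Group I] [Group G] [Group H]

/-- A pair of homomorphisms from `I` as a family indexed by `Bool`. -/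
def amalMaps (φ : I →* G) (ψ : I →* H) : ∀ b, I →* AmalFam G H b
  | false => φ
  | true => ψ

/-- The homomorphism from `G` to the pushout. -/
def pushG (φ : I →* G) (ψ : I →* H) : G →* PushoutI (amalMaps φ ψ) :=
  PushoutI.of (φ := amalMaps φ ψ) false

/-- The homomorphism from `H` to the pushout. -/
def pushH (φ : I →* G) (ψ : I →* H) : H →* PushoutI (amalMaps φ ψ) :=
  PushoutI.of (φ := amalMaps φ ψ) true

variable {φ : I →* G} {ψ : I →* H}

theorem pushG_eq_pushH (i : I) : pushG φ ψ (φ i) = pushH φ ψ (ψ i) :=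
  (PushoutI.of_apply_eq_base (amalMaps φ ψ) false i).trans
    (PushoutI.of_apply_eq_base (amalMaps φ ψ) true i).symm

theorem amalMaps_injective (hφ : Function.Injective φ) (hψ : Function.Injective ψ) :
    ∀ b, Function.Injective (amalMaps φ ψ b)
  | false => hφ
  | true => hψ

theorem pushG_injective (hφ : Function.Injective φ) (hψ : Function.Injective ψ) :
    Function.Injective (pushG φ ψ) :=
  PushoutI.of_injective (amalMaps_injective hφ hψ) false

theorem pushH_injective (hφ : Function.Injective φ) (hψ : Function.Injective ψ) :
    Function.Injective (pushH φ ψ) :=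
  PushoutI.of_injective (amalMaps_injective hφ hψ) true

/-- In the pushout, the factors `G` and `H` meet only in `I`. -/
theorem exists_of_pushG_eq_pushH (hφ : Function.Injective φ) (hψ : Function.Injective ψ)
    {g : G} {h : H} (e : pushG φ ψ g = pushH φ ψ h) : ∃ i, ψ i = h := by
  have hmem : pushH φ ψ h ∈ (PushoutI.base (amalMaps φ ψ)).range := by
    rw [← PushoutI.inf_of_range_eq_base_range (amalMaps_injective hφ hψ)
      (i := false) (j := true) (by simp)]
    exact ⟨⟨g, e⟩, ⟨h, rfl⟩⟩
  obtain ⟨i, hi⟩ := hmem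
  refine ⟨i, pushH_injective hφ hψ ?_⟩
  rw [← hi]
  exact PushoutI.of_apply_eq_base (amalMaps φ ψ) true i

/-- The map from the carrier `G ∪ H` to the pushout. -/
def amalEmb (φ : I →* G) (ψ : I →* H) : AmalCarrier G H ψ → PushoutI (amalMaps φ ψ) :=
  Sum.elim (pushG φ ψ) (fun h => pushH φ ψ h.1)

theorem amalEmb_amalG (g : G) : amalEmb φ ψ (amalG ψ g) = pushG φ ψ g := rfl

theorem amalEmb_amalH (h : H) : amalEmb φ ψ (amalH φ ψ h) = pushH φ ψ h := by
  by_cases hm : ∃ i : I, ψ i = h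
  · have e : amalH φ ψ h = amalG ψ (φ hm.choose) := dif_pos hm
    rw [e]
    exact (pushG_eq_pushH (φ := φ) (ψ := ψ) hm.choose).trans
      (congrArg (pushH φ ψ) hm.choose_spec)
  · have e : amalH φ ψ h = Sum.inr ⟨h, hm⟩ := dif_neg hm
    rw [e]
    rfl

theorem amalEmb_injective (hφ : Function.Injective φ) (hψ : Function.Injective ψ) :
    Function.Injective (amalEmb φ ψ) := by
  rintro (g | h) (g' | h') e
  · exact congrArg Sum.inl (pushG_injective hφ hψ e)
  · exact (h'.2 (exists_of_pushG_eq_pushH hφ hψ e)).elim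
  · exact (h.2 (exists_of_pushG_eq_pushH hφ hψ e.symm)).elim
  · exact congrArg Sum.inr (Subtype.ext (pushH_injective hφ hψ e))

theorem exists_amalEmb_eq (u : PushoutI (amalMaps φ ψ)) :
    (∃ p, amalEmb φ ψ p = u) ↔ u ∈ (pushG φ ψ).range ∨ u ∈ (pushH φ ψ).range := by
  constructor
  · rintro ⟨g | h, rfl⟩
    · exact Or.inl ⟨g, rfl⟩
    · exact Or.inr ⟨h.1, rfl⟩
  · rintro (⟨g, rfl⟩ | ⟨h, rfl⟩)
    · exact ⟨_, amalEmb_amalG g⟩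
    · exact ⟨_, amalEmb_amalH h⟩

theorem amalEmb_mem_range_pushG (hφ : Function.Injective φ) (hψ : Function.Injective ψ)
    (p : AmalCarrier G H ψ) : amalEmb φ ψ p ∈ (pushG φ ψ).range ↔ ∃ g, p = amalG ψ g :=
  exists_congr fun g => by
    rw [← amalEmb_amalG, (amalEmb_injective hφ hψ).eq_iff, eq_comm]

theorem amalEmb_mem_range_pushH (hφ : Function.Injective φ) (hψ : Function.Injective ψ)
    (p : AmalCarrier G H ψ) : amalEmb φ ψ p ∈ (pushH φ ψ).range ↔ ∃ h, p = amalH φ ψ h :=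
  exists_congr fun h => by
    rw [← amalEmb_amalH, (amalEmb_injective hφ hψ).eq_iff, eq_comm]

/-- The pushout property of `PushoutI`, for the two maps `pushG` and `pushH`. -/
theorem exists_push_lift {K : Type} [Group K] (kG : G →* K) (kH : H →* K)
    (hk : kG.comp φ = kH.comp ψ) : ∃ L : PushoutI (amalMaps φ ψ) →* K,
      (∀ g, L (pushG φ ψ g) = kG g) ∧ ∀ h, L (pushH φ ψ h) = kH h := by
  let f : ∀ b, AmalFam G H b →* K := fun b => match b with
    | false => kG
    | true => kH
  have hf : ∀ b, (f b).comp (amalMaps φ ψ b) = kG.comp φ := fun b => match b with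
    | false => rfl
    | true => hk.symm
  exact ⟨PushoutI.lift f _ hf, fun g => PushoutI.lift_of (i := false) f _ hf g,
    fun h => PushoutI.lift_of (i := true) f _ hf h⟩

end Amalgam

/-! ### The amalgamated product -/

/-- Let `G` and `H` be finite groups with a common subgroup `I`
(given by injections `φ : I →* G` and `ψ : I →* H`; the set `P = G ∪ H` identifies
`G ∩ H` with `I`).  On `P = G ∪ H`, with `σ` the inversion map, with
`D(P) = (G × G) ∪ (H × H)` and with products defined as in the parent groups, there
is a pregroup structure, and its universal group `U(P)` is the amalgamated free
product `G ∗_I H`, i.e. the pushout of the inclusions `I → G` and `I → H`. -/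
theorem amalgamatedProduct_pregroup {I G H : Type} [Group I] [Group G] [Group H]
    [Finite G] [Finite H] (φ : I →* G) (ψ : I →* H)
    (hφ : Function.Injective φ) (hψ : Function.Injective ψ) :
    ∃ pg : Pregroup (AmalCarrier G H ψ),
      pg.one = amalG ψ (1 : G) ∧
      (∀ g : G, pg.inv (amalG ψ g) = amalG ψ g⁻¹) ∧
      (∀ h : H, pg.inv (amalH φ ψ h) = amalH φ ψ h⁻¹) ∧
      (∀ a b : AmalCarrier G H ψ,
        pg.D a b ↔ ((∃ g : G, a = amalG ψ g) ∧ (∃ g' : G, b = amalG ψ g')) ∨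
          ((∃ h : H, a = amalH φ ψ h) ∧ (∃ h' : H, b = amalH φ ψ h'))) ∧
      (∀ g g' : G, pg.mul (amalG ψ g) (amalG ψ g') = amalG ψ (g * g')) ∧
      (∀ h h' : H, pg.mul (amalH φ ψ h) (amalH φ ψ h') = amalH φ ψ (h * h')) ∧
      ∃ (fG : G →* pg.UniversalGroup) (fH : H →* pg.UniversalGroup),
        IsAmalgamatedProduct φ ψ fG fH := by
  have hj := amalEmb_injective hφ hψ
  have mG := amalEmb_mem_range_pushG hφ hψ
  have mH := amalEmb_mem_range_pushH hφ hψ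
  let pg : Pregroup (AmalCarrier G H ψ) :=
    Pregroup.ofSubgroups (pushG φ ψ).range (pushH φ ψ).range (amalEmb φ ψ) hj exists_amalEmb_eq
  have hone : amalEmb φ ψ pg.one = 1 := Pregroup.map_one_ofSubgroups
  have hinv : ∀ x, amalEmb φ ψ (pg.inv x) = (amalEmb φ ψ x)⁻¹ := Pregroup.map_inv_ofSubgroups
  have hmul : ∀ x y, pg.D x y → amalEmb φ ψ (pg.mul x y) = amalEmb φ ψ x * amalEmb φ ψ y :=
    fun x y h => Pregroup.map_mul_ofSubgroups h
  have hD : ∀ a b, pg.D a b ↔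
      ((∃ g : G, a = amalG ψ g) ∧ (∃ g' : G, b = amalG ψ g')) ∨
        ((∃ h : H, a = amalH φ ψ h) ∧ (∃ h' : H, b = amalH φ ψ h')) := fun a b => by
    rw [← mG, ← mG, ← mH, ← mH]
    exact Pregroup.ofSubgroups_D a b
  have DG : ∀ g g', pg.D (amalG ψ g) (amalG ψ g') := fun g g' =>
    (hD _ _).2 (Or.inl ⟨⟨g, rfl⟩, ⟨g', rfl⟩⟩)
  have DH : ∀ h h', pg.D (amalH φ ψ h) (amalH φ ψ h') := fun h h' =>
    (hD _ _).2 (Or.inr ⟨⟨h, rfl⟩, ⟨h', rfl⟩⟩)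
  have mulG : ∀ g g', pg.mul (amalG ψ g) (amalG ψ g') = amalG ψ (g * g') := fun g g' =>
    hj (by rw [hmul _ _ (DG g g')]; simp only [amalEmb_amalG, map_mul])
  have mulH : ∀ h h', pg.mul (amalH φ ψ h) (amalH φ ψ h') = amalH φ ψ (h * h') := fun h h' =>
    hj (by rw [hmul _ _ (DH h h')]; simp only [amalEmb_amalH, map_mul])
  refine ⟨pg, hj (by rw [hone, amalEmb_amalG, map_one]),
    fun g => hj (by simp only [hinv, amalEmb_amalG, map_inv]),
    fun h => hj (by simp only [hinv, amalEmb_amalH, map_inv]),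
    hD, mulG, mulH,
    MonoidHom.mk' (fun g => pg.toU (amalG ψ g)) (fun g g' => by
      rw [← mulG, pg.toU_mul (DG g g')]),
    MonoidHom.mk' (fun h => pg.toU (amalH φ ψ h)) (fun h h' => by
      rw [← mulH, pg.toU_mul (DH h h')]), ?_, ?_⟩
  · ext i
    have : amalG ψ (φ i) = amalH φ ψ (ψ i) :=
      hj (by rw [amalEmb_amalG, amalEmb_amalH, pushG_eq_pushH])
    exact congrArg pg.toU this
  · intro K _ kG kH hk
    obtain ⟨L, LG, LH⟩ := exists_push_lift kG kH hk
    obtain ⟨u, hu⟩ := pg.liftU (fun p => L (amalEmb φ ψ p))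
      (fun x y h => by simp only [hmul x y h, map_mul])
    refine ⟨u, ⟨?_, ?_⟩, ?_⟩
    · ext g
      exact (hu _).trans (LG g)
    · ext h
      exact (hu _).trans ((congrArg L (amalEmb_amalH h)).trans (LH h))
    · rintro v ⟨vG, vH⟩
      refine pg.homU_ext fun x => (Eq.trans ?_ (hu x).symm)
      rcases (exists_amalEmb_eq (amalEmb φ ψ x)).1 ⟨x, rfl⟩ with hx | hx
      · obtain ⟨g, rfl⟩ := (mG x).1 hx
        exact (DFunLike.congr_fun vG g).trans (LG g).symm
      · obtain ⟨h, rfl⟩ := (mH x).1 hx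
        exact (DFunLike.congr_fun vH h).trans
          ((congrArg L (amalEmb_amalH h)).trans (LH h)).symm
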